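/- arXiv:2605.28702 — 9 statements merged into one kernel-verified Lean document; each statement's English description precedes it below -/
import Mathlib

section
/- Let Λ be a finite type, q : Λ → ℝ with q λ ≥ 0 for all λ and Σ_λ q λ = 1, and let x1, y1, x1', y1', x2, y2 : Λ → Bool be value assignments. For an event E ⊆ Λ write p(E) = Σ_{λ ∈ E} q λ. If p vanishes on each of the six events {λ : x1 λ ∧ y1' λ ∧ y2 λ}, {λ : y1 λ ∧ x1' λ ∧ y2 λ}, {λ : y1 λ ∧ y1' λ ∧ x2 λ}, {λ : x1 λ ∧ ¬y1' λ ∧ ¬y2 λ}, {λ : ¬y1 λ ∧ x1' λ ∧ ¬y2 λ}, {λ : ¬y1 λ ∧ ¬y1' λ ∧ x2 λ}, then p({λ : x1 λ ∧ x1' λ ∧ x2 λ}) = 0. -/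
open Finset

/-! Among the three Boolean values of `Y1`, `Y1'`, `Y2` two always agree. Of the six null events,
the two involving `X1` say that `X1` almost surely forces `Y1' ≠ Y2`; likewise `X1'` forces
`Y1 ≠ Y2`, and `X2` forces `Y1 ≠ Y1'`. These three inequalities cannot hold together, so `X1`, `X1'`
and `X2` hold together only on a null set. -/

open MeasureTheory
open scoped ENNReal

lemma bool_eq_or_eq_or_eq (a b c : Bool) : a = b ∨ b = c ∨ a = c := by
  decide +revert

section NullEvents

variable {Λ F : Type*} [FunLike F (Set Λ) ℝ≥0∞] [OuterMeasureClass F Λ]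

lemma measure_and_eq_null {μ : F} {p : Λ → Prop} {y z : Λ → Bool}
    (h_true : μ {l | p l ∧ y l = true ∧ z l = true} = 0)
    (h_false : μ {l | p l ∧ y l = false ∧ z l = false} = 0) :
    μ {l | p l ∧ y l = z l} = 0 := by
  refine measure_mono_null ?_ (measure_union_null h_true h_false)
  rintro l ⟨hp, hyz⟩
  cases hy : y l with
  | true => exact .inl ⟨hp, hy, hyz ▸ hy⟩
  | false => exact .inr ⟨hp, hy, hyz ▸ hy⟩

theorem hardy_gnchv_zero_general (μ : F) {x1 y1 x1' y1' x2 y2 : Λ → Bool}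
    (h1 : μ {l | x1 l = true ∧ y1' l = true ∧ y2 l = true} = 0)
    (h2 : μ {l | y1 l = true ∧ x1' l = true ∧ y2 l = true} = 0)
    (h3 : μ {l | y1 l = true ∧ y1' l = true ∧ x2 l = true} = 0)
    (h4 : μ {l | x1 l = true ∧ y1' l = false ∧ y2 l = false} = 0)
    (h5 : μ {l | y1 l = false ∧ x1' l = true ∧ y2 l = false} = 0)
    (h6 : μ {l | y1 l = false ∧ y1' l = false ∧ x2 l = true} = 0) :
    μ {l | x1 l = true ∧ x1' l = true ∧ x2 l = true} = 0 := by
  have hX1 : μ {l | x1 l = true ∧ y1' l = y2 l} = 0 := measure_and_eq_null h1 h4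
  have hX1' : μ {l | x1' l = true ∧ y1 l = y2 l} = 0 :=
    measure_and_eq_null (by simpa only [and_left_comm] using h2)
      (by simpa only [and_left_comm] using h5)
  have hX2 : μ {l | x2 l = true ∧ y1 l = y1' l} = 0 :=
    measure_and_eq_null (by simpa only [and_comm, and_assoc] using h3)
      (by simpa only [and_comm, and_assoc] using h6)
  refine measure_mono_null ?_ (measure_union_null hX2 (measure_union_null hX1 hX1'))
  rintro l ⟨hx1, hx1', hx2⟩
  exact (bool_eq_or_eq_or_eq (y1 l) (y1' l) (y2 l)).imp (⟨hx2, ·⟩) (.imp (⟨hx1, ·⟩) (⟨hx1', ·⟩))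

end NullEvents

section Weights

variable {Λ : Type*} {q : Λ → ℝ}

/-- The outer measure assigning to an event the total weight of its points, which makes a discrete
hidden-variable distribution an instance of the measure-theoretic setting. Negative weights are
truncated to `0` by `ENNReal.ofReal`. -/
noncomputable def weightOuterMeasure (q : Λ → ℝ) : OuterMeasure Λ :=
  .sum fun l => ENNReal.ofReal (q l) • .dirac l

lemma weightOuterMeasure_setOf [Fintype Λ] (hq : ∀ l, 0 ≤ q l) (p : Λ → Prop) [DecidablePred p] :
    weightOuterMeasure q {l | p l} = ENNReal.ofReal (∑ l with p l, q l) := by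
  rw [ENNReal.ofReal_sum_of_nonneg fun l _ => hq l, sum_filter]
  simp [weightOuterMeasure, Set.indicator_apply]

lemma weightOuterMeasure_setOf_eq_zero_iff [Fintype Λ] (hq : ∀ l, 0 ≤ q l) (p : Λ → Prop)
    [DecidablePred p] : weightOuterMeasure q {l | p l} = 0 ↔ ∑ l with p l, q l = 0 := by
  rw [weightOuterMeasure_setOf hq, ENNReal.ofReal_eq_zero,
    (sum_nonneg fun l _ => hq l).ge_iff_eq']

end Weights

/-- GNCHV Hardy zero: for any probability distribution `q` over a finite
hidden-variable set `Λ` with deterministic Boolean value assignments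
`x1, y1, x1', y1', x2, y2`, if the six Hardy zero-probability events have
probability zero then the target event `x1 ∧ x1' ∧ x2` has probability zero. -/
theorem hardy_gnchv_zero
    (Λ : Type) [Fintype Λ]
    (q : Λ → ℝ) (hq0 : ∀ l, 0 ≤ q l) (hq1 : ∑ l, q l = 1)
    (x1 y1 x1' y1' x2 y2 : Λ → Bool)
    (h1 : ∑ l ∈ univ.filter (fun l => x1 l = true ∧ y1' l = true ∧ y2 l = true), q l = 0)
    (h2 : ∑ l ∈ univ.filter (fun l => y1 l = true ∧ x1' l = true ∧ y2 l = true), q l = 0)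
    (h3 : ∑ l ∈ univ.filter (fun l => y1 l = true ∧ y1' l = true ∧ x2 l = true), q l = 0)
    (h4 : ∑ l ∈ univ.filter (fun l => x1 l = true ∧ y1' l = false ∧ y2 l = false), q l = 0)
    (h5 : ∑ l ∈ univ.filter (fun l => y1 l = false ∧ x1' l = true ∧ y2 l = false), q l = 0)
    (h6 : ∑ l ∈ univ.filter (fun l => y1 l = false ∧ y1' l = false ∧ x2 l = true), q l = 0) :
    ∑ l ∈ univ.filter (fun l => x1 l = true ∧ x1' l = true ∧ x2 l = true), q l = 0 := by
  rw [← weightOuterMeasure_setOf_eq_zero_iff hq0] at h1 h2 h3 h4 h5 h6 ⊢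
  exact hardy_gnchv_zero_general (weightOuterMeasure q) h1 h2 h3 h4 h5 h6
end

section
/- Let Λ be a finite type, q : Λ → ℝ with q λ ≥ 0 for all λ, and let x1, y1, x1', y1', x2, y2 : Λ → Bool. Writing p(E) = Σ_{λ ∈ E} q λ for events E ⊆ Λ, the Hardy witness satisfies 𝒲_H := p({x1 ∧ x1' ∧ x2}) − p({x1 ∧ y1' ∧ y2}) − p({y1 ∧ x1' ∧ y2}) − p({y1 ∧ y1' ∧ x2}) − p({x1 ∧ ¬y1' ∧ ¬y2}) − p({¬y1 ∧ x1' ∧ ¬y2}) − p({¬y1 ∧ ¬y1' ∧ x2}) ≤ 0. -/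
open Finset

/-!
If `x1`, `x1'` and `x2` all hold, then so does one of the six exclusion events: when `y2` holds,
either `y1'` or `y1` holds and gives the first or second event, or both fail and give the sixth;
when `y2` fails, swap `y1`, `y1'` with their negations. The inequality is therefore a union bound
for a monotone subadditive function on a Boolean algebra of events.
-/

section BooleanAlgebra

variable {α M : Type*} [BooleanAlgebra α]

theorem inf_le_sup_sup_compl_inf_compl (a b c u v z : α) :
    a ⊓ b ⊓ c ⊓ z ≤ a ⊓ u ⊓ z ⊔ v ⊓ b ⊓ z ⊔ vᶜ ⊓ uᶜ ⊓ c := by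
  set t := a ⊓ b ⊓ c ⊓ z
  have on_u : t ⊓ u ≤ a ⊓ u ⊓ z := by order
  have on_v : t ⊓ v ≤ v ⊓ b ⊓ z := by order
  have on_neither : t ⊓ (u ⊔ v)ᶜ ≤ vᶜ ⊓ uᶜ ⊓ c := by
    rw [compl_sup]
    order
  calc t = t ⊓ u ⊔ t ⊓ v ⊔ t ⊓ (u ⊔ v)ᶜ := by rw [← inf_sup_left, sup_inf_inf_compl]
    _ ≤ a ⊓ u ⊓ z ⊔ v ⊓ b ⊓ z ⊔ vᶜ ⊓ uᶜ ⊓ c := sup_le_sup (sup_le_sup on_u on_v) on_neither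

section Subadditive

variable [AddCommMonoid M] [PartialOrder M] [IsOrderedAddMonoid M] {p : α → M}

theorem map_inf_le_add_add_of_subadditive (hmono : Monotone p)
    (hsub : ∀ a b, p (a ⊔ b) ≤ p a + p b) (a b c u v z : α) :
    p (a ⊓ b ⊓ c ⊓ z) ≤ p (a ⊓ u ⊓ z) + p (v ⊓ b ⊓ z) + p (vᶜ ⊓ uᶜ ⊓ c) :=
  calc p (a ⊓ b ⊓ c ⊓ z) ≤ p (a ⊓ u ⊓ z ⊔ v ⊓ b ⊓ z ⊔ vᶜ ⊓ uᶜ ⊓ c) :=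
        hmono (inf_le_sup_sup_compl_inf_compl a b c u v z)
    _ ≤ p (a ⊓ u ⊓ z ⊔ v ⊓ b ⊓ z) + p (vᶜ ⊓ uᶜ ⊓ c) := hsub _ _
    _ ≤ p (a ⊓ u ⊓ z) + p (v ⊓ b ⊓ z) + p (vᶜ ⊓ uᶜ ⊓ c) := by
      gcongr
      exact hsub _ _

theorem hardy_target_le_sum_exclusions (hmono : Monotone p)
    (hsub : ∀ a b, p (a ⊔ b) ≤ p a + p b) (x1 y1 x1' y1' x2 y2 : α) :
    p (x1 ⊓ x1' ⊓ x2) ≤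
      p (x1 ⊓ y1' ⊓ y2) + p (y1 ⊓ x1' ⊓ y2) + p (y1 ⊓ y1' ⊓ x2)
        + p (x1 ⊓ y1'ᶜ ⊓ y2ᶜ) + p (y1ᶜ ⊓ x1' ⊓ y2ᶜ) + p (y1ᶜ ⊓ y1'ᶜ ⊓ x2) := by
  have on_y2 : p (x1 ⊓ x1' ⊓ x2 ⊓ y2) ≤
      p (x1 ⊓ y1' ⊓ y2) + p (y1 ⊓ x1' ⊓ y2) + p (y1ᶜ ⊓ y1'ᶜ ⊓ x2) :=
    map_inf_le_add_add_of_subadditive hmono hsub x1 x1' x2 y1' y1 y2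
  have on_compl_y2 : p (x1 ⊓ x1' ⊓ x2 ⊓ y2ᶜ) ≤
      p (x1 ⊓ y1'ᶜ ⊓ y2ᶜ) + p (y1ᶜ ⊓ x1' ⊓ y2ᶜ) + p (y1 ⊓ y1' ⊓ x2) := by
    simpa only [compl_compl] using
      map_inf_le_add_add_of_subadditive hmono hsub x1 x1' x2 y1'ᶜ y1ᶜ y2ᶜ
  calc p (x1 ⊓ x1' ⊓ x2)
      = p (x1 ⊓ x1' ⊓ x2 ⊓ y2 ⊔ x1 ⊓ x1' ⊓ x2 ⊓ y2ᶜ) := by rw [sup_inf_inf_compl]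
    _ ≤ p (x1 ⊓ x1' ⊓ x2 ⊓ y2) + p (x1 ⊓ x1' ⊓ x2 ⊓ y2ᶜ) := hsub _ _
    _ ≤ _ := add_le_add on_y2 on_compl_y2
    _ = _ := by ac_rfl

end Subadditive

theorem hardy_witness_nonpositive_general [AddCommGroup M] [PartialOrder M]
    [IsOrderedAddMonoid M] {p : α → M} (hmono : Monotone p)
    (hsub : ∀ a b, p (a ⊔ b) ≤ p a + p b) (x1 y1 x1' y1' x2 y2 : α) :
    p (x1 ⊓ x1' ⊓ x2)
      - p (x1 ⊓ y1' ⊓ y2)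
      - p (y1 ⊓ x1' ⊓ y2)
      - p (y1 ⊓ y1' ⊓ x2)
      - p (x1 ⊓ y1'ᶜ ⊓ y2ᶜ)
      - p (y1ᶜ ⊓ x1' ⊓ y2ᶜ)
      - p (y1ᶜ ⊓ y1'ᶜ ⊓ x2)
      ≤ 0 := by
  simpa only [sub_sub, sub_nonpos, add_assoc] using
    hardy_target_le_sum_exclusions hmono hsub x1 y1 x1' y1' x2 y2

end BooleanAlgebra

section EventWeight

variable {Λ M : Type*} [Fintype Λ] [AddCommMonoid M] {q : Λ → M}

/-- The total `q`-weight of the event `E`. Events are `Bool`-valued functions, like the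
observables, so that `⊓` and `ᶜ` combine value assignments pointwise. -/
def eventWeight (q : Λ → M) (E : Λ → Bool) : M :=
  ∑ l ∈ univ.filter (fun l => E l = true), q l

variable [PartialOrder M] [IsOrderedAddMonoid M]

theorem eventWeight_mono (hq : ∀ l, 0 ≤ q l) : Monotone (eventWeight q) := fun _ _ hEF =>
  sum_le_sum_of_subset_of_nonneg (monotone_filter_right univ fun l _ => hEF l) fun l _ _ => hq l

theorem eventWeight_sup_le (hq : ∀ l, 0 ≤ q l) (E F : Λ → Bool) :
    eventWeight q (E ⊔ F) ≤ eventWeight q E + eventWeight q F := by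
  classical
  simp only [eventWeight, Pi.sup_apply, Bool.sup_eq_bor, Bool.or_eq_true, filter_or]
  rw [← sum_union_inter]
  exact le_add_of_nonneg_right (sum_nonneg fun l _ => hq l)

end EventWeight

/-- The Hardy-type linear witness `𝒲_H` is nonpositive for every global
noncontextual hidden-variable model: with nonnegative weights `q` over a
finite hidden-variable set and deterministic Boolean value assignments,
the target-event probability minus the six Hardy exclusion-event
probabilities is at most zero. -/
theorem hardy_witness_nonpositive
    (Λ : Type) [Fintype Λ]
    (q : Λ → ℝ) (hq0 : ∀ l, 0 ≤ q l)
    (x1 y1 x1' y1' x2 y2 : Λ → Bool) :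
    (∑ l ∈ univ.filter (fun l => x1 l = true ∧ x1' l = true ∧ x2 l = true), q l)
      - (∑ l ∈ univ.filter (fun l => x1 l = true ∧ y1' l = true ∧ y2 l = true), q l)
      - (∑ l ∈ univ.filter (fun l => y1 l = true ∧ x1' l = true ∧ y2 l = true), q l)
      - (∑ l ∈ univ.filter (fun l => y1 l = true ∧ y1' l = true ∧ x2 l = true), q l)
      - (∑ l ∈ univ.filter (fun l => x1 l = true ∧ y1' l = false ∧ y2 l = false), q l)
      - (∑ l ∈ univ.filter (fun l => y1 l = false ∧ x1' l = true ∧ y2 l = false), q l)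
      - (∑ l ∈ univ.filter (fun l => y1 l = false ∧ y1' l = false ∧ x2 l = true), q l)
      ≤ 0 := by
  simpa [eventWeight, and_assoc] using
    hardy_witness_nonpositive_general (eventWeight_mono hq0) (eventWeight_sup_le hq0)
      x1 y1 x1' y1' x2 y2
end

section
/- Let θ be the angle with cos θ = 5^(−1/4) and sin θ = √(1 − 1/√5) > 0, and for j ∈ ZMod 5 let v_j ∈ ℝ³ be v_j = (cos θ, sin θ·cos(4πj/5), sin θ·sin(4πj/5)). Define the 3×3 real matrices P_j = v_j v_jᵀ, B_j = 1 − 2·P_j, and D = Σ_{j=0}^{4} B_j · B_{j+1} (indices modulo 5). Then D is the diagonal matrix diag(5 − 4√5, 2√5 − 5, 2√5 − 5). -/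
/-!
The azimuths of the five vectors `v_j` are the values of a character `ψ` of `ZMod 5`. Since `ψ` and
`ψ ^ 2` are both nontrivial, orthogonality of characters makes `∑ P_j` diagonal. The condition
`cos² θ = 1 / √5` is the one making cyclically adjacent vectors orthogonal, so that
`B_j B_{j+1} = 1 - 2 P_j - 2 P_{j+1}`, and hence `D = 5 - 4 ∑ P_j`.
-/

/-- The KCBS five-cycle vectors
`v_j = (cos θ, sin θ·cos(4πj/5), sin θ·sin(4πj/5))`, indexed by `ZMod 5`. -/
noncomputable def kcbsVec (θ : ℝ) (j : ZMod 5) : Fin 3 → ℝ :=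
  ![Real.cos θ,
    Real.sin θ * Real.cos (4 * Real.pi * (j.val : ℝ) / 5),
    Real.sin θ * Real.sin (4 * Real.pi * (j.val : ℝ) / 5)]

/-- The rank-one KCBS projections `P_j = v_j v_jᵀ`. -/
noncomputable def kcbsProj (θ : ℝ) (j : ZMod 5) : Matrix (Fin 3) (Fin 3) ℝ :=
  Matrix.vecMulVec (kcbsVec θ j) (kcbsVec θ j)

/-- The KCBS `±1` observables `B_j = I − 2P_j`. -/
noncomputable def kcbsObs (θ : ℝ) (j : ZMod 5) : Matrix (Fin 3) (Fin 3) ℝ :=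
  1 - 2 • kcbsProj θ j

open Real Matrix ComplexConjugate

lemma sum_one_sub_two_nsmul_mul_add_right {R ι : Type*} [NonAssocRing R] [AddGroup ι] [Fintype ι]
    {p : ι → R} {a : ι} (hp : ∀ i, p i * p (i + a) = 0) :
    ∑ i, (1 - 2 • p i) * (1 - 2 • p (i + a)) = Fintype.card ι • 1 - 4 • ∑ i, p i := by
  have hterm (i : ι) : (1 - 2 • p i) * (1 - 2 • p (i + a)) = 1 - 2 • p i - 2 • p (i + a) := by
    simp only [sub_mul, mul_sub, one_mul, mul_one, smul_mul_smul_comm, hp, smul_zero, sub_zero]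
  have hshift : ∑ i, p (i + a) = ∑ i, p i := Equiv.sum_comp (Equiv.addRight a) p
  simp only [hterm, Finset.sum_sub_distrib, ← Finset.smul_sum, hshift, Finset.sum_const,
    Finset.card_univ]
  abel

section Character

variable {G : Type*} [Fintype G]

lemma sum_addChar_re_eq_zero [AddGroup G] {ψ : AddChar G ℂ} (hψ : ψ ≠ 1) :
    ∑ g, (ψ g).re = 0 := by
  rw [← Complex.re_sum, AddChar.sum_eq_zero_of_ne_one hψ, Complex.zero_re]

lemma sum_addChar_im_eq_zero [AddGroup G] {ψ : AddChar G ℂ} (hψ : ψ ≠ 1) :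
    ∑ g, (ψ g).im = 0 := by
  rw [← Complex.im_sum, AddChar.sum_eq_zero_of_ne_one hψ, Complex.zero_im]

lemma sum_addChar_re_sq_add_sum_im_sq [AddLeftCancelMonoid G] (ψ : AddChar G ℂ) :
    ∑ g, (ψ g).re ^ 2 + ∑ g, (ψ g).im ^ 2 = Fintype.card G := by
  have hnorm (g : G) : (ψ g).re ^ 2 + (ψ g).im ^ 2 = 1 := by
    rw [pow_two, pow_two, ← Complex.normSq_apply, ← Complex.sq_norm, ψ.norm_apply, one_pow]
  simp only [← Finset.sum_add_distrib, hnorm, Finset.sum_const, Finset.card_univ, nsmul_eq_mul,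
    mul_one]

lemma sum_addChar_re_sq_eq_sum_im_sq [AddCommGroup G] {ψ : AddChar G ℂ} (hψ : ψ ^ 2 ≠ 1) :
    ∑ g, (ψ g).re ^ 2 = ∑ g, (ψ g).im ^ 2 := by
  have h := sum_addChar_re_eq_zero hψ
  simp only [pow_two, AddChar.mul_apply, Complex.mul_re, Finset.sum_sub_distrib] at h
  simpa only [pow_two] using sub_eq_zero.mp h

lemma sum_addChar_re_mul_im_eq_zero [AddCommGroup G] {ψ : AddChar G ℂ} (hψ : ψ ^ 2 ≠ 1) :
    ∑ g, (ψ g).re * (ψ g).im = 0 := by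
  have h := sum_addChar_im_eq_zero hψ
  simp only [pow_two, AddChar.mul_apply, Complex.mul_im, mul_comm (ψ _).im,
    Finset.sum_add_distrib] at h
  linarith

end Character

/-- The point at colatitude `θ` from the first axis whose azimuth is given by `z`. It has norm one
when `z` does; `z` is a complex number rather than an angle so that it can be a character value. -/
noncomputable def coneVec (θ : ℝ) (z : ℂ) : Fin 3 → ℝ :=
  ![cos θ, sin θ * z.re, sin θ * z.im]

lemma vecMulVec_coneVec_self (θ : ℝ) (z : ℂ) :
    vecMulVec (coneVec θ z) (coneVec θ z) =
      !![cos θ ^ 2, cos θ * sin θ * z.re, cos θ * sin θ * z.im;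
        cos θ * sin θ * z.re, sin θ ^ 2 * z.re ^ 2, sin θ ^ 2 * (z.re * z.im);
        cos θ * sin θ * z.im, sin θ ^ 2 * (z.re * z.im), sin θ ^ 2 * z.im ^ 2] := by
  ext a b
  fin_cases a <;> fin_cases b <;>
    simp only [coneVec, vecMulVec_apply, of_apply, cons_val', cons_val_fin_one, cons_val,
      Fin.zero_eta, Fin.mk_one, Fin.reduceFinMk] <;>
    ring

lemma coneVec_dotProduct_coneVec (θ : ℝ) (z w : ℂ) :
    coneVec θ z ⬝ᵥ coneVec θ w = cos θ ^ 2 + sin θ ^ 2 * (conj z * w).re := by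
  simp only [coneVec, dotProduct, Fin.sum_univ_three, cons_val, Complex.mul_re, Complex.conj_re,
    Complex.conj_im]
  ring

lemma coneVec_addChar_dotProduct_add {G : Type*} [AddCommGroup G] [Finite G] (θ : ℝ)
    (ψ : AddChar G ℂ) (g h : G) :
    coneVec θ (ψ g) ⬝ᵥ coneVec θ (ψ (g + h)) = cos θ ^ 2 + sin θ ^ 2 * (ψ h).re := by
  rw [coneVec_dotProduct_coneVec, ← ψ.map_neg_eq_conj, ← ψ.map_add_eq_mul, neg_add_cancel_left]

lemma sum_vecMulVec_coneVec_addChar {G : Type*} [AddCommGroup G] [Fintype G] (θ : ℝ)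
    {ψ : AddChar G ℂ} (hψ : ψ ^ 2 ≠ 1) :
    ∑ g, vecMulVec (coneVec θ (ψ g)) (coneVec θ (ψ g)) =
      (Fintype.card G : ℝ) • diagonal ![cos θ ^ 2, sin θ ^ 2 / 2, sin θ ^ 2 / 2] := by
  have hψ_ne_one : ψ ≠ 1 := by
    rintro rfl
    exact hψ (one_pow 2)
  have hre := sum_addChar_re_eq_zero hψ_ne_one
  have him := sum_addChar_im_eq_zero hψ_ne_one
  have hre_im := sum_addChar_re_mul_im_eq_zero hψ
  have hre_sq : ∑ g, (ψ g).re ^ 2 = Fintype.card G / 2 := by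
    linarith [sum_addChar_re_sq_add_sum_im_sq ψ, sum_addChar_re_sq_eq_sum_im_sq hψ]
  have him_sq : ∑ g, (ψ g).im ^ 2 = Fintype.card G / 2 := by
    rw [← sum_addChar_re_sq_eq_sum_im_sq hψ, hre_sq]
  ext a b
  fin_cases a <;> fin_cases b <;>
    simp only [Matrix.sum_apply, Matrix.smul_apply, smul_eq_mul, vecMulVec_coneVec_self, of_apply,
      cons_val', cons_val_fin_one, cons_val, diagonal_apply, reduceIte, Fin.reduceEq,
      Fin.zero_eta, Fin.mk_one, Fin.reduceFinMk, ← Finset.mul_sum, Finset.sum_const,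
      Finset.card_univ, nsmul_eq_mul, hre, him, hre_im, hre_sq, him_sq] <;>
    ring

/-- The character `j ↦ exp (4πij/5)` of `ZMod 5`, whose values are the azimuths of the KCBS
vectors. -/
noncomputable def kcbsChar : AddChar (ZMod 5) ℂ :=
  ZMod.stdAddChar ^ 2

lemma kcbsChar_apply (j : ZMod 5) :
    kcbsChar j = Complex.exp (↑(4 * π * (j.val : ℝ) / 5) * Complex.I) := by
  rw [kcbsChar, AddChar.pow_apply, ZMod.stdAddChar_apply, ZMod.toCircle_apply,
    ← Complex.exp_nat_mul]
  congr 1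
  push_cast
  ring

lemma kcbsChar_sq_ne_one : kcbsChar ^ 2 ≠ 1 := by
  rw [kcbsChar, ← pow_mul, AddChar.pow_mulShift]
  exact ZMod.isPrimitive_stdAddChar 5 (by decide)

lemma kcbsChar_one_re : (kcbsChar 1).re = -((1 + √5) / 4) := by
  have hangle : 4 * π * ((1 : ZMod 5).val : ℝ) / 5 = π - π / 5 := by
    rw [ZMod.val_one'' (by norm_num), Nat.cast_one]
    ring
  rw [kcbsChar_apply, Complex.exp_ofReal_mul_I_re, hangle, cos_pi_sub, cos_pi_div_five]

lemma kcbsVec_eq_coneVec (θ : ℝ) (j : ZMod 5) : kcbsVec θ j = coneVec θ (kcbsChar j) := by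
  simp only [kcbsVec, coneVec, kcbsChar_apply, Complex.exp_ofReal_mul_I_re,
    Complex.exp_ofReal_mul_I_im]

lemma kcbsVec_dotProduct_add_one {θ : ℝ} (hθ : cos θ ^ 2 = 1 / √5) (j : ZMod 5) :
    kcbsVec θ j ⬝ᵥ kcbsVec θ (j + 1) = 0 := by
  rw [kcbsVec_eq_coneVec, kcbsVec_eq_coneVec, coneVec_addChar_dotProduct_add, kcbsChar_one_re,
    sin_sq, hθ]
  field_simp
  linear_combination -sq_sqrt (show (0 : ℝ) ≤ 5 by norm_num)

lemma kcbsProj_mul_add_one {θ : ℝ} (hθ : cos θ ^ 2 = 1 / √5) (j : ZMod 5) :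
    kcbsProj θ j * kcbsProj θ (j + 1) = 0 := by
  rw [kcbsProj, kcbsProj, vecMulVec_mul_vecMulVec, kcbsVec_dotProduct_add_one hθ, zero_smul,
    vecMulVec_zero]

lemma sum_kcbsProj (θ : ℝ) :
    ∑ j, kcbsProj θ j = (5 : ℝ) • diagonal ![cos θ ^ 2, sin θ ^ 2 / 2, sin θ ^ 2 / 2] := by
  simpa only [kcbsProj, kcbsVec_eq_coneVec, ZMod.card, Nat.cast_ofNat] using
    sum_vecMulVec_coneVec_addChar θ kcbsChar_sq_ne_one

lemma five_rpow_neg_one_fourth_sq : ((5 : ℝ) ^ (-(1 / 4 : ℝ))) ^ 2 = 1 / √5 := by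
  rw [← rpow_mul_natCast (by norm_num), sqrt_eq_rpow, one_div (5 ^ _), ← rpow_neg (by norm_num)]
  norm_num

theorem kcbs_sum_operator_diag_general {θ : ℝ} (hθ : cos θ ^ 2 = 1 / √5) :
    ∑ j : ZMod 5, kcbsObs θ j * kcbsObs θ (j + 1) =
      diagonal ![5 - 4 * √5, 2 * √5 - 5, 2 * √5 - 5] := by
  calc ∑ j : ZMod 5, kcbsObs θ j * kcbsObs θ (j + 1)
      = 5 • 1 - 4 • ∑ j, kcbsProj θ j :=
        sum_one_sub_two_nsmul_mul_add_right (kcbsProj_mul_add_one hθ)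
    _ = diagonal ![5 - 4 * √5, 2 * √5 - 5, 2 * √5 - 5] := by
        rw [sum_kcbsProj, sin_sq, hθ, ← sqrt_div_self', ← diagonal_one]
        simp only [← diagonal_smul, diagonal_sub]
        congr 1
        ext i
        fin_cases i <;>
          simp only [Pi.smul_apply, smul_eq_mul, nsmul_eq_mul, Nat.cast_ofNat, cons_val,
            Fin.zero_eta, Fin.mk_one, Fin.reduceFinMk] <;>
          ring

/-- The KCBS sum operator `D = Σ_j B_j B_{j+1}` is the diagonal matrix
`diag(5 − 4√5, 2√5 − 5, 2√5 − 5)`. -/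
theorem kcbs_sum_operator_diag (θ : ℝ)
    (hcos : Real.cos θ = (5 : ℝ) ^ (-(1 / 4 : ℝ)))
    (hsin : Real.sin θ = Real.sqrt (1 - 1 / Real.sqrt 5)) :
    (∑ j : ZMod 5, kcbsObs θ j * kcbsObs θ (j + 1))
      = Matrix.diagonal
          ![5 - 4 * Real.sqrt 5, 2 * Real.sqrt 5 - 5, 2 * Real.sqrt 5 - 5] := by
  exact kcbs_sum_operator_diag_general (hcos ▸ five_rpow_neg_one_fourth_sq)
end

section
/- Let b : ZMod 5 → ℤ and γ : ZMod 5 → ℤ be functions with b j ∈ {−1, 1} and γ j ∈ {−1, 1} for every j, and assume Π_{j=0}^{4} γ j = 1. Then Σ_{j=0}^{4} γ j · b j · b (j+1) ≥ −3. -/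
/-!
In `∏ j, γ j * b j * b (j + 1)` every sign `b j` occurs twice, so the `n` terms multiply to
`∏ j, γ j`. If this product is not `(-1) ^ n`, which for `n = 5` says that it is `1`, then the terms
are not all `-1`: at least one equals `1` and each of the others is at least `-1`, so their sum is
at least `1 - (n - 1)`. The argument works with any permutation in place of the shift `j ↦ j + 1`.
-/

section Signs

variable {ι R : Type*}

theorem mul_eq_neg_one_or_one [Monoid R] [HasDistribNeg R] {x y : R}
    (hx : x = -1 ∨ x = 1) (hy : y = -1 ∨ y = 1) : x * y = -1 ∨ x * y = 1 := by
  rcases hx with rfl | rfl <;> rcases hy with rfl | rfl <;> simp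

theorem exists_eq_one_of_prod_ne_neg_one_pow_card [CommMonoid R] [HasDistribNeg R]
    {s : Finset ι} {x : ι → R} (hx : ∀ i ∈ s, x i = -1 ∨ x i = 1)
    (hprod : ∏ i ∈ s, x i ≠ (-1) ^ s.card) : ∃ i ∈ s, x i = 1 := by
  contrapose! hprod
  exact Finset.prod_eq_pow_card fun i hi => (hx i hi).resolve_right (hprod i hi)

theorem two_sub_card_le_sum_of_exists_eq_one [Ring R] [PartialOrder R] [IsOrderedAddMonoid R]
    {s : Finset ι} {x : ι → R} (hx : ∀ i ∈ s, -1 ≤ x i) (hone : ∃ i ∈ s, x i = 1) :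
    2 - (s.card : R) ≤ ∑ i ∈ s, x i := by
  obtain ⟨i, hi, hxi⟩ := hone
  rw [sub_le_iff_le_add]
  calc
    (2 : R) = x i + 1 := by rw [hxi, one_add_one_eq_two]
    _ ≤ ∑ j ∈ s, (x j + 1) :=
      Finset.single_le_sum (f := fun j => x j + 1)
        (fun j hj => neg_le_iff_add_nonneg.mp (hx j hj)) hi
    _ = ∑ j ∈ s, x j + s.card := by simp [Finset.sum_add_distrib]

theorem prod_mul_mul_perm_of_mul_self_eq_one [Fintype ι] [CommMonoid R] (σ : Equiv.Perm ι)
    {b : ι → R} (γ : ι → R) (hb : ∀ j, b j * b j = 1) :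
    ∏ j, γ j * b j * b (σ j) = ∏ j, γ j := by
  calc
    ∏ j, γ j * b j * b (σ j) = (∏ j, γ j) * (∏ j, b j) * ∏ j, b (σ j) := by
      simp only [Finset.prod_mul_distrib]
    _ = (∏ j, γ j) * ∏ j, b j * b j := by
      rw [Equiv.prod_comp σ b, mul_assoc, ← Finset.prod_mul_distrib]
    _ = ∏ j, γ j := by simp only [hb, Finset.prod_const_one, mul_one]

end Signs

theorem five_cycle_facets_general {ι R : Type*} [Fintype ι] [CommRing R] [PartialOrder R]
    [IsOrderedRing R] (σ : Equiv.Perm ι) (b γ : ι → R)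
    (hb : ∀ j, b j = -1 ∨ b j = 1)
    (hγ : ∀ j, γ j = -1 ∨ γ j = 1)
    (hprod : ∏ j, γ j ≠ (-1) ^ Fintype.card ι) :
    2 - (Fintype.card ι : R) ≤ ∑ j, γ j * b j * b (σ j) := by
  have hb_sq : ∀ j, b j * b j = 1 := fun j => by rcases hb j with h | h <;> simp [h]
  have hsign : ∀ j, γ j * b j * b (σ j) = -1 ∨ γ j * b j * b (σ j) = 1 := fun j =>
    mul_eq_neg_one_or_one (mul_eq_neg_one_or_one (hγ j) (hb j)) (hb (σ j))
  have hlower : ∀ j, -1 ≤ γ j * b j * b (σ j) := fun j =>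
    (hsign j).elim Eq.ge fun h => (neg_le_self zero_le_one).trans_eq h.symm
  rw [← prod_mul_mul_perm_of_mul_self_eq_one σ γ hb_sq] at hprod
  exact two_sub_card_le_sum_of_exists_eq_one (fun j _ => hlower j)
    (exists_eq_one_of_prod_ne_neg_one_pow_card (fun j _ => hsign j) hprod)

/-- Tight correlator facets of the `n = 5` cycle noncontextuality polytope:
for signs `γ_j = ±1` with `Π_j γ_j = 1`, every deterministic `±1` assignment
`b` satisfies `Σ_j γ_j·b_j·b_{j+1} ≥ −3`. -/
theorem five_cycle_facets (b γ : ZMod 5 → ℤ)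
    (hb : ∀ j, b j = -1 ∨ b j = 1)
    (hγ : ∀ j, γ j = -1 ∨ γ j = 1)
    (hprod : ∏ j : ZMod 5, γ j = 1) :
    -3 ≤ ∑ j : ZMod 5, γ j * b j * b (j + 1) := by
  have hprod_ne : ∏ j, γ j ≠ (-1) ^ Fintype.card (ZMod 5) := by rw [hprod, ZMod.card]; decide
  simpa [ZMod.card] using five_cycle_facets_general (Equiv.addRight 1) b γ hb hγ hprod_ne
end

section
/- Let Λ be a finite type, q : Λ → ℝ with q λ ≥ 0 and Σ_λ q λ = 1, and let A1, A2, B, C : Λ → ℤ be functions with values in {−1, 1}. Then Σ_λ q λ · (A1 λ · B λ + A1 λ · C λ + A2 λ · B λ − A2 λ · C λ) ≥ −2. -/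
/-!
Grouping the terms as `a₁ (b + c) + a₂ (b - c)` bounds each deterministic CHSH value by
`|b + c| + |b - c| = 2 max(|b|, |c|)` as soon as `a₁` and `a₂` lie in `[-1, 1]`. A hidden-variable
expectation is a convex combination of such values.
-/

theorem abs_add_add_abs_sub_eq_two_nsmul_max {G : Type*} [AddCommGroup G] [LinearOrder G]
    [IsOrderedAddMonoid G] (b c : G) : |b + c| + |b - c| = 2 • max |b| |c| := by
  grind

section LinearOrderedRing

variable {R : Type*} [Ring R] [LinearOrder R] [IsOrderedRing R]

theorem abs_intCast_le_one_of_eq_neg_one_or_eq_one {n : ℤ} (hn : n = -1 ∨ n = 1) :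
    |(n : R)| ≤ 1 := by
  rcases hn with rfl | rfl <;> simp

theorem abs_chsh_le_two_mul_max {a₁ a₂ : R} (ha₁ : |a₁| ≤ 1) (ha₂ : |a₂| ≤ 1) (b c : R) :
    |a₁ * b + a₁ * c + a₂ * b - a₂ * c| ≤ 2 * max |b| |c| := by
  calc |a₁ * b + a₁ * c + a₂ * b - a₂ * c|
      = |a₁ * (b + c) + a₂ * (b - c)| := by rw [mul_add, mul_sub, add_sub_assoc]
    _ ≤ |a₁ * (b + c)| + |a₂ * (b - c)| := abs_add_le _ _
    _ = |a₁| * |b + c| + |a₂| * |b - c| := by rw [abs_mul, abs_mul]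
    _ ≤ |b + c| + |b - c| :=
      add_le_add (mul_le_of_le_one_left (abs_nonneg _) ha₁)
        (mul_le_of_le_one_left (abs_nonneg _) ha₂)
    _ = 2 * max |b| |c| := by
      rw [abs_add_add_abs_sub_eq_two_nsmul_max, nsmul_eq_mul, Nat.cast_ofNat]

theorem neg_two_le_chsh {a₁ a₂ b c : R} (ha₁ : |a₁| ≤ 1) (ha₂ : |a₂| ≤ 1) (hb : |b| ≤ 1)
    (hc : |c| ≤ 1) : -2 ≤ a₁ * b + a₁ * c + a₂ * b - a₂ * c := by
  have abs_chsh_le_two : |a₁ * b + a₁ * c + a₂ * b - a₂ * c| ≤ 2 :=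
    (abs_chsh_le_two_mul_max ha₁ ha₂ b c).trans
      (mul_le_of_le_one_right zero_le_two (max_le hb hc))
  exact neg_le_of_abs_le abs_chsh_le_two

end LinearOrderedRing

theorem chsh_type_lower_bound_general {Λ K : Type*} [Field K] [LinearOrder K]
    [IsStrictOrderedRing K] (s : Finset Λ) {q a₁ a₂ b c : Λ → K}
    (hq0 : ∀ l ∈ s, 0 ≤ q l) (hq1 : ∑ l ∈ s, q l = 1)
    (ha₁ : ∀ l ∈ s, |a₁ l| ≤ 1) (ha₂ : ∀ l ∈ s, |a₂ l| ≤ 1)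
    (hb : ∀ l ∈ s, |b l| ≤ 1) (hc : ∀ l ∈ s, |c l| ≤ 1) :
    -2 ≤ ∑ l ∈ s, q l * (a₁ l * b l + a₁ l * c l + a₂ l * b l - a₂ l * c l) :=
  (convex_Ici (𝕜 := K) (-2 : K)).sum_mem hq0 hq1 fun l hl =>
    neg_two_le_chsh (ha₁ l hl) (ha₂ l hl) (hb l hl) (hc l hl)

/-- Generalized-Bell (CHSH-type) lower bound: for any hidden-variable
distribution `q` over a finite set `Λ` and deterministic `±1` assignments
`A1, A2, B, C`, one has `⟨A1B⟩ + ⟨A1C⟩ + ⟨A2B⟩ − ⟨A2C⟩ ≥ −2`. -/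
theorem chsh_type_lower_bound
    (Λ : Type) [Fintype Λ]
    (q : Λ → ℝ) (hq0 : ∀ l, 0 ≤ q l) (hq1 : ∑ l, q l = 1)
    (A1 A2 B C : Λ → ℤ)
    (hA1 : ∀ l, A1 l = -1 ∨ A1 l = 1)
    (hA2 : ∀ l, A2 l = -1 ∨ A2 l = 1)
    (hB : ∀ l, B l = -1 ∨ B l = 1)
    (hC : ∀ l, C l = -1 ∨ C l = 1) :
    -2 ≤ ∑ l, q l * ((A1 l * B l : ℤ) + A1 l * C l + A2 l * B l - A2 l * C l) := by
  have abs_le_one {f : Λ → ℤ} (hf : ∀ l, f l = -1 ∨ f l = 1) (l : Λ) : |(f l : ℝ)| ≤ 1 :=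
    abs_intCast_le_one_of_eq_neg_one_or_eq_one (hf l)
  simpa only [Int.cast_mul] using chsh_type_lower_bound_general Finset.univ (fun l _ => hq0 l) hq1
    (fun l _ => abs_le_one hA1 l) (fun l _ => abs_le_one hA2 l)
    (fun l _ => abs_le_one hB l) (fun l _ => abs_le_one hC l)
end

section
/- Let V be the 9×9 swap matrix on ℂ³ ⊗ ℂ³, P₋ = (I₉ − V)/2, ρ_W = (1/2)·(P₋/3) + (1/2)·(I₉/9), E the projector onto |00⟩, and ρ = (1/2)·E + (1/2)·ρ_W. Let ρ^{T_B} be the partial transpose on the second factor, ρ^{T_B}((m,k),(n,l)) = ρ((m,l),(n,k)). Then (37 − 3√177)/144 is an eigenvalue of ρ^{T_B}, this number is negative, and consequently ρ^{T_B} is not positive semidefinite (so ρ is NPT, hence entangled). -/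
open scoped ComplexOrder

/-- The swap matrix `V` on `ℂ³ ⊗ ℂ³` (`V·(x⊗y) = y⊗x`). -/
def swapMat : Matrix (Fin 3 × Fin 3) (Fin 3 × Fin 3) ℂ :=
  fun p q => if p.1 = q.2 ∧ p.2 = q.1 then 1 else 0

/-- The antisymmetric projector `P₋ = (I₉ − V)/2`. -/
noncomputable def Pminus : Matrix (Fin 3 × Fin 3) (Fin 3 × Fin 3) ℂ :=
  (1 / 2 : ℂ) • ((1 : Matrix (Fin 3 × Fin 3) (Fin 3 × Fin 3) ℂ) - swapMat)

/-- The qutrit Werner state `ρ_W = (1/2)·(P₋/3) + (1/2)·(I₉/9)` at `w = 1/2`. -/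
noncomputable def rhoWerner : Matrix (Fin 3 × Fin 3) (Fin 3 × Fin 3) ℂ :=
  (1 / 2 : ℂ) • ((1 / 3 : ℂ) • Pminus)
    + (1 / 2 : ℂ) • ((1 / 9 : ℂ) • (1 : Matrix (Fin 3 × Fin 3) (Fin 3 × Fin 3) ℂ))

/-- The projector `E` onto `|00⟩`. -/
def flagProj : Matrix (Fin 3 × Fin 3) (Fin 3 × Fin 3) ℂ :=
  fun p q => if p = ((0 : Fin 3), (0 : Fin 3)) ∧ q = ((0 : Fin 3), (0 : Fin 3)) then 1 else 0

/-- The flagged qutrit Werner-local state `ρ = (1/2)·E + (1/2)·ρ_W`. -/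
noncomputable def rhoFlagged : Matrix (Fin 3 × Fin 3) (Fin 3 × Fin 3) ℂ :=
  (1 / 2 : ℂ) • flagProj + (1 / 2 : ℂ) • rhoWerner

/-- The partial transpose of `ρ` on the second (Bob) factor:
`ρ^{T_B}((m,k),(n,l)) = ρ((m,l),(n,k))`. -/
noncomputable def rhoFlaggedPT : Matrix (Fin 3 × Fin 3) (Fin 3 × Fin 3) ℂ :=
  fun p q => rhoFlagged (p.1, q.2) (q.1, p.2)

/-!
Partial transposition fixes `I` and `E = |00⟩⟨00|` and turns the swap `V` into `|Ω⟩⟨Ω|`, where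
`Ω = ∑ₖ |kk⟩`. Hence `ρ^{T_B} = (5/72) I + (1/2) |00⟩⟨00| - (1/24) |Ω⟩⟨Ω|` is a rank-two
perturbation of a scalar matrix, and on the span of `|00⟩` and `Ω` the perturbation has eigenvalues
`t` with `(t - 1/2) (t + 1/8) = -1/48`. The negative root outweighs the scalar part `5/72`.
-/

section Matrices

open Matrix

variable {l m n o R : Type*}

/-- The partial transpose on the second tensor factor, as a linear map; the blocks may be
rectangular. -/
def partialTranspose [Semiring R] : Matrix (l × m) (n × o) R →ₗ[R] Matrix (l × o) (n × m) R where
  toFun M := of fun p q => M (p.1, q.2) (q.1, p.2)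
  map_add' _ _ := rfl
  map_smul' _ _ := rfl

theorem partialTranspose_apply [Semiring R] (M : Matrix (l × m) (n × o) R) (p : l × o)
    (q : n × m) : partialTranspose M p q = M (p.1, q.2) (q.1, p.2) :=
  rfl

theorem partialTranspose_single [DecidableEq l] [DecidableEq m] [DecidableEq n] [DecidableEq o]
    [Semiring R] (i : l) (k : m) (i' : n) (k' : o) (a : R) :
    partialTranspose (single (i, k) (i', k') a) = single (i, k') (i', k) a := by
  ext p q
  simp only [partialTranspose_apply, single_apply, Prod.ext_iff]
  grind

theorem partialTranspose_one [DecidableEq m] [DecidableEq n] [Semiring R] :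
    partialTranspose (1 : Matrix (m × n) (m × n) R) = 1 := by
  ext p q
  simp only [partialTranspose_apply, one_apply, Prod.ext_iff]
  grind

theorem permMatrix_prodComm_apply [DecidableEq n] [Zero R] [One R] (p q : n × n) :
    Equiv.Perm.permMatrix R (Equiv.prodComm n n) p q = if p.1 = q.2 ∧ p.2 = q.1 then 1 else 0 := by
  have swap_eq_iff : p.swap = q ↔ p.1 = q.2 ∧ p.2 = q.1 := by
    rw [Prod.ext_iff, and_comm, Prod.fst_swap, Prod.snd_swap]
  simp [PEquiv.toMatrix_apply, swap_eq_iff]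

-- `vec 1` is the unnormalised maximally entangled vector `Ω`.
theorem partialTranspose_permMatrix_prodComm [DecidableEq n] [Semiring R] :
    partialTranspose (Equiv.Perm.permMatrix R (Equiv.prodComm n n)) =
      vecMulVec (vec 1) (vec 1) := by
  ext p q
  simp only [partialTranspose_apply, permMatrix_prodComm_apply, vecMulVec_apply, vec, one_apply]
  grind

/-- The operator `a I + b |ii⟩⟨ii| + c V` on the tensor square of `Rⁿ`, with `V` the swap: an
unnormalised Werner state flagged by `|ii⟩`. -/
def flaggedWerner [DecidableEq n] [Semiring R] (i : n) (a b c : R) : Matrix (n × n) (n × n) R :=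
  a • 1 + b • single (i, i) (i, i) 1 + c • Equiv.Perm.permMatrix R (Equiv.prodComm n n)

theorem partialTranspose_flaggedWerner [DecidableEq n] [Semiring R] (i : n) (a b c : R) :
    partialTranspose (flaggedWerner i a b c) =
      a • 1 + b • vecMulVec (Pi.single (i, i) 1) (Pi.single (i, i) 1)
        + c • vecMulVec (vec 1) (vec 1) := by
  simp only [flaggedWerner, map_add, map_smul, partialTranspose_one, partialTranspose_single,
    partialTranspose_permMatrix_prodComm, ← single_eq_single_vecMulVec_single]

-- The condition on `t` is the characteristic equation of the operator on the span of `u` and `w`.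
theorem vecMulVec_add_vecMulVec_mulVec_eq_smul [Fintype n] [CommRing R] (u u' w w' : n → R) {t : R}
    (ht : (t - u' ⬝ᵥ u) * (t - w' ⬝ᵥ w) = (u' ⬝ᵥ w) * (w' ⬝ᵥ u)) :
    (vecMulVec u u' + vecMulVec w w') *ᵥ ((u' ⬝ᵥ w) • u + (t - u' ⬝ᵥ u) • w) =
      t • ((u' ⬝ᵥ w) • u + (t - u' ⬝ᵥ u) • w) := by
  have coeff_w : (u' ⬝ᵥ w) * (w' ⬝ᵥ u) + (t - u' ⬝ᵥ u) * (w' ⬝ᵥ w) = t * (t - u' ⬝ᵥ u) := by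
    linear_combination -ht
  calc
    _ = ((u' ⬝ᵥ w) * (u' ⬝ᵥ u) + (t - u' ⬝ᵥ u) * (u' ⬝ᵥ w)) • u
        + ((u' ⬝ᵥ w) * (w' ⬝ᵥ u) + (t - u' ⬝ᵥ u) * (w' ⬝ᵥ w)) • w := by
      simp only [add_mulVec, vecMulVec_mulVec, op_smul_eq_smul, dotProduct_add, dotProduct_smul,
        smul_eq_mul]
    _ = (t * (u' ⬝ᵥ w)) • u + (t * (t - u' ⬝ᵥ u)) • w := by
      rw [coeff_w]
      congr 2
      ring
    _ = _ := by rw [smul_add, smul_smul, smul_smul]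

theorem partialTranspose_flaggedWerner_mulVec_eq_smul [Fintype n] [DecidableEq n] [CommRing R]
    (i : n) {a b c μ : R} (hμ : (μ - a - b) * (μ - a - c * Fintype.card n) = b * c) :
    partialTranspose (flaggedWerner i a b c) *ᵥ (b • Pi.single (i, i) 1 + (μ - a - b) • vec 1) =
      μ • (b • Pi.single (i, i) 1 + (μ - a - b) • vec 1) := by
  have omega_sq : vec (1 : Matrix n n R) ⬝ᵥ vec 1 = Fintype.card n := by
    rw [vec_dotProduct_vec, transpose_one, Matrix.mul_one, trace_one]
  have rank_two := vecMulVec_add_vecMulVec_mulVec_eq_smul (t := μ - a) (Pi.single (i, i) 1)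
    (b • Pi.single (i, i) 1) (vec (1 : Matrix n n R)) (c • vec 1) (by simpa [omega_sq] using hμ)
  simp only [smul_dotProduct, single_dotProduct, Pi.single_eq_same, vec, one_apply_eq, smul_eq_mul,
    mul_one, vecMulVec_smul] at rank_two
  rw [partialTranspose_flaggedWerner, add_assoc, add_mulVec, smul_mulVec, one_mulVec, rank_two,
    ← add_smul, add_sub_cancel]

theorem smul_single_add_smul_vec_one_ne_zero [DecidableEq n] [Nontrivial n] [Semiring R] (i : n)
    {b : R} (hb : b ≠ 0) (s : R) :
    b • Pi.single (i, i) 1 + s • vec (1 : Matrix n n R) ≠ 0 := by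
  obtain ⟨j, hj⟩ := exists_ne i
  intro h
  have hs : s = 0 := by simpa [hj] using congrFun h (j, j)
  exact hb (by simpa [hs] using congrFun h (i, i))

theorem exists_partialTranspose_flaggedWerner_mulVec_eq_smul [Fintype n] [DecidableEq n]
    [Nontrivial n] [CommRing R] (i : n) {a b c μ : R} (hb : b ≠ 0)
    (hμ : (μ - a - b) * (μ - a - c * Fintype.card n) = b * c) :
    ∃ v, v ≠ 0 ∧ partialTranspose (flaggedWerner i a b c) *ᵥ v = μ • v :=
  ⟨_, smul_single_add_smul_vec_one_ne_zero i hb _,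
    partialTranspose_flaggedWerner_mulVec_eq_smul i hμ⟩

theorem eigenvalue_nonneg_of_posSemidef {𝕜 : Type*} [RCLike 𝕜] [Fintype n] {A : Matrix n n 𝕜}
    (hA : A.PosSemidef) {v : n → 𝕜} (hv : v ≠ 0) {μ : 𝕜} (hμ : A *ᵥ v = μ • v) : 0 ≤ μ := by
  have h_quad : 0 ≤ μ * (star v ⬝ᵥ v) := by
    simpa only [hμ, dotProduct_smul, smul_eq_mul] using hA.dotProduct_mulVec_nonneg v
  have h_norm : 0 < star v ⬝ᵥ v := dotProduct_star_self_pos_iff.mpr hv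
  exact le_of_mul_le_mul_right (by simpa using h_quad) h_norm

end Matrices

theorem rhoFlagged_eq_flaggedWerner :
    rhoFlagged = flaggedWerner 0 (5 / 72) (1 / 2) (-1 / 24) := by
  have swapMat_eq : swapMat = Equiv.Perm.permMatrix ℂ (Equiv.prodComm (Fin 3) (Fin 3)) := by
    ext p q
    rw [permMatrix_prodComm_apply, swapMat]
  have flagProj_eq : flagProj = Matrix.single (0, 0) (0, 0) 1 := by
    ext p q
    simp only [flagProj, Matrix.single_apply, eq_comm]
  rw [rhoFlagged, rhoWerner, Pminus, flaggedWerner, swapMat_eq, flagProj_eq]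
  module

theorem rhoFlaggedPT_eq_partialTranspose :
    rhoFlaggedPT = partialTranspose (flaggedWerner 0 (5 / 72) (1 / 2) (-1 / 24)) := by
  rw [← rhoFlagged_eq_flaggedWerner]
  rfl

/-- The flagged qutrit Werner-local state is NPT: `(37 − 3√177)/144` is a
negative eigenvalue of the partial transpose, which is therefore not positive
semidefinite; hence `ρ` is entangled. -/
theorem rhoFlagged_NPT :
    (∃ v : Fin 3 × Fin 3 → ℂ, v ≠ 0 ∧
        rhoFlaggedPT.mulVec v
          = (((37 - 3 * Real.sqrt 177) / 144 : ℝ) : ℂ) • v) ∧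
      ((37 - 3 * Real.sqrt 177) / 144 : ℝ) < 0 ∧
      ¬ rhoFlaggedPT.PosSemidef := by
  have h_neg : ((37 - 3 * Real.sqrt 177) / 144 : ℝ) < 0 := by
    have : (37 / 3 : ℝ) < Real.sqrt 177 := Real.lt_sqrt_of_sq_lt (by norm_num)
    linarith
  obtain ⟨μ, hμ⟩ : ∃ μ : ℝ, μ = (37 - 3 * Real.sqrt 177) / 144 := ⟨_, rfl⟩
  rw [← hμ] at h_neg ⊢
  have h_char : (μ - 5 / 72 - 1 / 2) * (μ - 5 / 72 - -1 / 24 * 3) = 1 / 2 * (-1 / 24) := by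
    rw [hμ]
    linear_combination Real.sq_sqrt (show (0 : ℝ) ≤ 177 by norm_num) / 2304
  obtain ⟨v, hv, h_eigen⟩ : ∃ v, v ≠ 0 ∧ rhoFlaggedPT.mulVec v = (μ : ℂ) • v := by
    rw [rhoFlaggedPT_eq_partialTranspose]
    exact exists_partialTranspose_flaggedWerner_mulVec_eq_smul 0 (by norm_num)
      (by simpa using congrArg Complex.ofReal h_char)
  refine ⟨⟨v, hv, h_eigen⟩, h_neg, fun h_posSemidef => h_neg.not_ge ?_⟩
  exact_mod_cast eigenvalue_nonneg_of_posSemidef h_posSemidef hv h_eigen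
end

section
/- Let D = diag(5 − 4√5, 2√5 − 5, 2√5 − 5) be the KCBS sum operator, built from projections P_j = v_j v_jᵀ and observables B_j = I − 2P_j on the KCBS five-cycle vectors. For σ = diag(2/3, 1/6, 1/6): (i) Tr(σ·D) = 5/3 − 2√5, and 5/3 − 2√5 > −3; (ii) for every j ∈ ZMod 5, Tr(σ·B_j·B_{j+1}) = (√5 − 6)/(3√5). -/
/-!
Adjacent azimuths of the five-cycle differ by `4π/5` modulo `2π`, and `cos (4π/5) = -(1 + √5)/4`,
so the polar angle `cos² θ = 1/√5` is the one at which adjacent vectors are orthogonal. Then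
`P_j P_{j+1} = 0`, hence `B_j B_{j+1} = 1 - 2 P_j - 2 P_{j+1}`, and a state invariant under
rotations about the first axis gives every `P_j` the same expectation.
-/

open Matrix

theorem one_sub_two_smul_mul_one_sub_two_smul {R : Type*} [NonAssocRing R] {p q : R}
    (hpq : p * q = 0) : (1 - 2 • p) * (1 - 2 • q) = 1 - 2 • p - 2 • q := by
  simp only [sub_mul, mul_sub, one_mul, mul_one, smul_mul_smul_comm, hpq, smul_zero, sub_zero]

theorem cos_zmod_angle_sub {n : ℕ} [NeZero n] (k : ℤ) (i j : ZMod n) :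
    Real.cos (2 * k * Real.pi * i.val / n - 2 * k * Real.pi * j.val / n)
      = Real.cos (2 * k * Real.pi * (i - j).val / n) := by
  obtain ⟨m, hm⟩ : (n : ℤ) ∣ (i - j).val - (i.val - j.val) := by
    rw [← ZMod.intCast_zmod_eq_zero_iff_dvd]
    push_cast
    simp only [ZMod.natCast_zmod_val, sub_self]
  have hval : ((i - j).val : ℝ) = i.val - j.val + n * m := by
    rw [← sub_eq_iff_eq_add']
    exact_mod_cast hm
  have hn : (n : ℝ) ≠ 0 := NeZero.ne _
  rw [← Real.cos_add_int_mul_two_pi _ (k * m), hval]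
  congr 1
  push_cast
  field_simp

theorem cos_four_mul_pi_div_five : Real.cos (4 * Real.pi / 5) = -(1 + Real.sqrt 5) / 4 := by
  rw [show 4 * Real.pi / 5 = Real.pi - Real.pi / 5 by ring, Real.cos_pi_sub, Real.cos_pi_div_five,
    neg_div]

theorem rpow_neg_one_div_four_sq {x : ℝ} (hx : 0 ≤ x) :
    (x ^ (-(1 / 4 : ℝ))) ^ 2 = 1 / Real.sqrt x := by
  rw [← Real.rpow_mul_natCast hx, Real.sqrt_eq_rpow, one_div (x ^ _), ← Real.rpow_neg hx]
  norm_num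

theorem kcbsVec_dotProduct_kcbsVec (θ : ℝ) (i j : ZMod 5) :
    kcbsVec θ i ⬝ᵥ kcbsVec θ j
      = Real.cos θ ^ 2 + Real.sin θ ^ 2 * Real.cos (4 * Real.pi * (j - i).val / 5) := by
  have hangle : Real.cos (4 * Real.pi * j.val / 5 - 4 * Real.pi * i.val / 5)
      = Real.cos (4 * Real.pi * (j - i).val / 5) := by
    have := cos_zmod_angle_sub 2 j i
    norm_num only at this
    exact this
  rw [← hangle, Real.cos_sub]
  simp only [kcbsVec, vec3_dotProduct, cons_val]
  ring

theorem kcbsVec_dotProduct_succ {θ : ℝ} (hcos : Real.cos θ ^ 2 = 1 / Real.sqrt 5) (j : ZMod 5) :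
    kcbsVec θ j ⬝ᵥ kcbsVec θ (j + 1) = 0 := by
  have hsqrt : Real.sqrt 5 ^ 2 = 5 := Real.sq_sqrt (by norm_num)
  rw [kcbsVec_dotProduct_kcbsVec, add_sub_cancel_left, show (1 : ZMod 5).val = 1 from rfl,
    Nat.cast_one, mul_one, cos_four_mul_pi_div_five, Real.sin_sq, hcos]
  field_simp
  linear_combination -hsqrt

theorem kcbsProj_mul_succ {θ : ℝ} (hcos : Real.cos θ ^ 2 = 1 / Real.sqrt 5) (j : ZMod 5) :
    kcbsProj θ j * kcbsProj θ (j + 1) = 0 := by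
  rw [kcbsProj, kcbsProj, vecMulVec_mul_vecMulVec, kcbsVec_dotProduct_succ hcos, zero_smul,
    vecMulVec_zero]

theorem kcbsObs_mul_succ {θ : ℝ} (hcos : Real.cos θ ^ 2 = 1 / Real.sqrt 5) (j : ZMod 5) :
    kcbsObs θ j * kcbsObs θ (j + 1) = 1 - 2 • kcbsProj θ j - 2 • kcbsProj θ (j + 1) :=
  one_sub_two_smul_mul_one_sub_two_smul (kcbsProj_mul_succ hcos j)

theorem trace_diagonal_mul_kcbsProj (θ a b : ℝ) (j : ZMod 5) :
    trace (diagonal ![a, b, b] * kcbsProj θ j) = a * Real.cos θ ^ 2 + b * Real.sin θ ^ 2 := by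
  simp only [kcbsProj, kcbsVec, mul_vecMulVec, trace_vecMulVec, vec3_dotProduct, mulVec_diagonal,
    cons_val]
  linear_combination (b * Real.sin θ ^ 2) *
    Real.cos_sq_add_sin_sq (4 * Real.pi * (j.val : ℝ) / 5)

theorem trace_diagonal_mul_kcbsObs_mul_succ {θ : ℝ} (hcos : Real.cos θ ^ 2 = 1 / Real.sqrt 5)
    (a b : ℝ) (j : ZMod 5) :
    trace (diagonal ![a, b, b] * (kcbsObs θ j * kcbsObs θ (j + 1)))
      = a + 2 * b - 4 * (a / Real.sqrt 5 + b * (1 - 1 / Real.sqrt 5)) := by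
  simp only [kcbsObs_mul_succ hcos, mul_sub, mul_one, mul_smul_comm, trace_sub, trace_smul,
    trace_diagonal_mul_kcbsProj, trace_diagonal, Fin.sum_univ_three, cons_val, Real.sin_sq, hcos]
  ring

theorem flagged_marginal_kcbs_noncontextual_general {θ : ℝ}
    (hcos : Real.cos θ ^ 2 = 1 / Real.sqrt 5) :
    (let D : Matrix (Fin 3) (Fin 3) ℝ :=
      Matrix.diagonal ![5 - 4 * Real.sqrt 5, 2 * Real.sqrt 5 - 5, 2 * Real.sqrt 5 - 5]
     let σ : Matrix (Fin 3) (Fin 3) ℝ := Matrix.diagonal ![2 / 3, 1 / 6, 1 / 6]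
     Matrix.trace (σ * D) = 5 / 3 - 2 * Real.sqrt 5) ∧
    (5 / 3 - 2 * Real.sqrt 5 > -3) ∧
    (∀ j : ZMod 5,
      Matrix.trace ((Matrix.diagonal ![2 / 3, 1 / 6, 1 / 6] : Matrix (Fin 3) (Fin 3) ℝ)
          * (kcbsObs θ j * kcbsObs θ (j + 1)))
        = (Real.sqrt 5 - 6) / (3 * Real.sqrt 5)) := by
  refine ⟨?_, ?_, fun j => ?_⟩
  · simp only [diagonal_mul_diagonal, trace_diagonal, Fin.sum_univ_three, cons_val]
    ring
  · have hsqrt : Real.sqrt 5 < 7 / 3 := (Real.sqrt_lt' (by norm_num)).2 (by norm_num)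
    linarith
  · rw [trace_diagonal_mul_kcbsObs_mul_succ hcos]
    field_simp
    ring

/-- For the local qutrit marginal `σ = diag(2/3, 1/6, 1/6)` of the flagged
qutrit Werner-local state and the KCBS sum operator
`D = diag(5 − 4√5, 2√5 − 5, 2√5 − 5)`:
(i) `Tr(σD) = 5/3 − 2√5 > −3`, and
(ii) all five adjacent correlations equal `(√5 − 6)/(3√5)`. -/
theorem flagged_marginal_kcbs_noncontextual (θ : ℝ)
    (hcos : Real.cos θ = (5 : ℝ) ^ (-(1 / 4 : ℝ)))
    (hsin : Real.sin θ = Real.sqrt (1 - 1 / Real.sqrt 5)) :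
    (let D : Matrix (Fin 3) (Fin 3) ℝ :=
      Matrix.diagonal ![5 - 4 * Real.sqrt 5, 2 * Real.sqrt 5 - 5, 2 * Real.sqrt 5 - 5]
     let σ : Matrix (Fin 3) (Fin 3) ℝ := Matrix.diagonal ![2 / 3, 1 / 6, 1 / 6]
     Matrix.trace (σ * D) = 5 / 3 - 2 * Real.sqrt 5) ∧
    (5 / 3 - 2 * Real.sqrt 5 > -3) ∧
    (∀ j : ZMod 5,
      Matrix.trace ((Matrix.diagonal ![2 / 3, 1 / 6, 1 / 6] : Matrix (Fin 3) (Fin 3) ℝ)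
          * (kcbsObs θ j * kcbsObs θ (j + 1)))
        = (Real.sqrt 5 - 6) / (3 * Real.sqrt 5)) :=
  flagged_marginal_kcbs_noncontextual_general (by rw [hcos, rpow_neg_one_div_four_sq (by norm_num)])
end

section
/- Let n be a natural number and for each party i ∈ Fin n let M_i be a finite set of measurements, each measurement j having a finite outcome set O_j, and let 𝒞_i be a finite family of local contexts (finite subsets of M_i); let 𝒞 ⊆ 𝒞_1 × ⋯ × 𝒞_n be the tested family of multipartite contexts, and let p_C be an empirical probability assignment giving, for each C = (C_1,…,C_n) ∈ 𝒞, a probability distribution over joint outcome tuples (m_{ij})_{i, j ∈ C_i}. Suppose (GLHV): there is a finite type Λ, weights q : Λ → ℝ with q λ ≥ 0 and Σ_λ q λ = 1, and for each i, each C_i and each λ a probability distribution p_i(·|C_i,λ) over outcome tuples of C_i, such that p_C((m_{ij})) = Σ_λ q λ · Π_i p_i((m_{ij})_{j∈C_i} | C_i, λ) for every C ∈ 𝒞. Suppose further (conditional NCHV refinement): for each i and λ there are a finite type Σ_i, weights q_{i,λ} : Σ_i → ℝ with q_{i,λ} σ ≥ 0 and Σ_σ q_{i,λ} σ = 1, and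 context-independent responses p_i(m | j, σ, λ) (probability distributions over O_j for each j ∈ M_i), such that p_i((m_{ij})_{j∈C_i} | C_i, λ) = Σ_σ q_{i,λ}(σ) · Π_{j∈C_i} p_i(m_{ij} | j, σ, λ) for every C_i ∈ 𝒞_i. Then there exist a finite type Ξ, weights Q : Ξ → ℝ with Q ξ ≥ 0 and Σ_ξ Q ξ = 1, and context-independent responses r(m | i, j, ξ) such that p_C((m_{ij})) = Σ_ξ Q ξ · Π_i Π_{j∈C_i} r(m_{ij} | i, j, ξ) for every C ∈ 𝒞; that is, the empirical model admits a global noncontextual hidden-variable (GNCHV) model. -/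
/-!
The global hidden variable consists of the shared `l` together with one refinement variable per
party, drawn independently given `l`. Substituting the refinements into the GLHV formula leaves, for
each `l`, a product over parties of sums; distributivity turns it into a sum over tuples of
refinement variables. The glued responses do not depend on the context because the refinement of
party `i` at `l` is one and the same for all local contexts of `i`.
-/

theorem sigma_mul_mem_stdSimplex {R Λ : Type*} {S : Λ → Type*} [Semiring R] [PartialOrder R]
    [PosMulMono R] [Fintype Λ] [∀ l, Fintype (S l)] {q : Λ → R} {w : ∀ l, S l → R}
    (hq : q ∈ stdSimplex R Λ) (hw : ∀ l, w l ∈ stdSimplex R (S l)) :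
    (fun ξ : (l : Λ) × S l ↦ q ξ.1 * w ξ.1 ξ.2) ∈ stdSimplex R ((l : Λ) × S l) := by
  refine ⟨fun ξ ↦ mul_nonneg (hq.1 ξ.1) ((hw ξ.1).1 ξ.2), ?_⟩
  simp only [Fintype.sum_sigma, ← Finset.mul_sum, (hw _).2, mul_one, hq.2]

theorem pi_prod_mem_stdSimplex {R ι : Type*} {S : ι → Type*} [CommSemiring R] [PartialOrder R]
    [ZeroLEOneClass R] [PosMulMono R] [Fintype ι] [DecidableEq ι] [∀ i, Fintype (S i)]
    {w : ∀ i, S i → R} (hw : ∀ i, w i ∈ stdSimplex R (S i)) :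
    (fun σ : ∀ i, S i ↦ ∏ i, w i (σ i)) ∈ stdSimplex R (∀ i, S i) := by
  refine ⟨fun σ ↦ Finset.prod_nonneg fun i _ ↦ (hw i).1 (σ i), ?_⟩
  simp only [← Fintype.prod_sum, (hw _).2, Finset.prod_const_one]

theorem comp_equiv_mem_stdSimplex {R α β : Type*} [Semiring R] [PartialOrder R] [Fintype α]
    [Fintype β] {f : β → R} (hf : f ∈ stdSimplex R β) (e : α ≃ β) : f ∘ e ∈ stdSimplex R α :=
  ⟨fun a ↦ hf.1 (e a), (e.sum_comp f).trans hf.2⟩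

section GluedWeight

variable {R ι Λ : Type*} [CommSemiring R] [Fintype ι] {S : ι → Λ → Type*}

/-- The joint weight of the glued hidden variable `ξ = (l, σ)`, where the shared variable `l` has
weight `q` and, given `l`, the refinement variables `σ i` of the parties are independent with
weights `w i l`. -/
def gluedWeight (q : Λ → R) (w : ∀ i l, S i l → R) (ξ : (l : Λ) × ∀ i, S i l) : R :=
  q ξ.1 * ∏ i, w i ξ.1 (ξ.2 i)

variable [Fintype Λ] [DecidableEq ι] [∀ i l, Fintype (S i l)]

theorem gluedWeight_mem_stdSimplex [PartialOrder R] [ZeroLEOneClass R] [PosMulMono R]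
    {q : Λ → R} {w : ∀ i l, S i l → R} (hq : q ∈ stdSimplex R Λ)
    (hw : ∀ i l, w i l ∈ stdSimplex R (S i l)) :
    gluedWeight q w ∈ stdSimplex R ((l : Λ) × ∀ i, S i l) :=
  sigma_mul_mem_stdSimplex hq fun l ↦ pi_prod_mem_stdSimplex fun i ↦ hw i l

theorem sum_gluedWeight_mul_prod (q : Λ → R) (w f : ∀ i l, S i l → R) :
    ∑ ξ, gluedWeight q w ξ * ∏ i, f i ξ.1 (ξ.2 i) =
      ∑ l, q l * ∏ i, ∑ σ, w i l σ * f i l σ := by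
  simp only [gluedWeight, Fintype.sum_sigma, Fintype.prod_sum, Finset.mul_sum,
    Finset.prod_mul_distrib, mul_assoc]

end GluedWeight

/-- A noncontextual hidden-variable model of the behaviour `p` of a single system on the family `𝒞`
of contexts: the hidden variable `σ : S` has weight `w σ`, and `r j σ` is the outcome distribution
of the measurement `j` at `σ`, whatever the context in which `j` is performed. -/
structure IsNCHVModel {R M S : Type*} {O : M → Type*} [CommSemiring R] [PartialOrder R]
    [∀ j, Fintype (O j)] [Fintype S] (𝒞 : Set (Finset M))
    (p : (C : Finset M) → ((j : C) → O j) → R) (w : S → R) (r : (j : M) → S → O j → R) : Prop where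
  weight_mem : w ∈ stdSimplex R S
  response_mem (j : M) (σ : S) : r j σ ∈ stdSimplex R (O j)
  eq_sum : ∀ C ∈ 𝒞, ∀ m : (j : C) → O j, p C m = ∑ σ, w σ * ∏ j : C, r j σ (m j)

/-- A global noncontextual hidden-variable (GNCHV) model of the multipartite behaviour `p` on the
family `T` of multipartite contexts: the hidden variable `ξ : Ξ` is shared by all parties and has
weight `Q ξ`, and `r i j ξ` is the outcome distribution of the measurement `j` of party `i` at
`ξ`. -/
structure IsGNCHVModel {R ι Ξ : Type*} {M : ι → Type*} {O : (i : ι) → M i → Type*}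
    [CommSemiring R] [PartialOrder R] [Fintype ι] [∀ i j, Fintype (O i j)] [Fintype Ξ]
    (T : Set (∀ i, Finset (M i)))
    (p : (C : ∀ i, Finset (M i)) → (∀ i, (j : C i) → O i j) → R)
    (Q : Ξ → R) (r : (i : ι) → (j : M i) → Ξ → O i j → R) : Prop where
  weight_mem : Q ∈ stdSimplex R Ξ
  response_mem (i : ι) (j : M i) (ξ : Ξ) : r i j ξ ∈ stdSimplex R (O i j)
  eq_sum : ∀ C ∈ T, ∀ m : ∀ i, (j : C i) → O i j,
    p C m = ∑ ξ, Q ξ * ∏ i, ∏ j : C i, r i j ξ (m i j)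

section Composition

variable {R ι : Type*} {M : ι → Type*} {O : (i : ι) → M i → Type*}
  [CommSemiring R] [PartialOrder R] [Fintype ι] [∀ i j, Fintype (O i j)]
  {T : Set (∀ i, Finset (M i))} {p : (C : ∀ i, Finset (M i)) → (∀ i, (j : C i) → O i j) → R}

theorem IsGNCHVModel.comp_equiv {Ξ Ξ' : Type*} [Fintype Ξ] [Fintype Ξ'] {Q : Ξ → R}
    {r : (i : ι) → (j : M i) → Ξ → O i j → R} (h : IsGNCHVModel T p Q r) (e : Ξ' ≃ Ξ) :
    IsGNCHVModel T p (Q ∘ e) fun i j ↦ r i j ∘ e where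
  weight_mem := comp_equiv_mem_stdSimplex h.weight_mem e
  response_mem i j x := h.response_mem i j (e x)
  eq_sum C hC m := (h.eq_sum C hC m).trans
    (e.sum_comp fun ξ ↦ Q ξ * ∏ i, ∏ j : C i, r i j ξ (m i j)).symm

variable [ZeroLEOneClass R] [PosMulMono R] {Λ : Type*} [Fintype Λ]
  {Ctx : ∀ i, Set (Finset (M i))} {q : Λ → R}
  {pb : (i : ι) → (Ci : Finset (M i)) → Λ → ((j : Ci) → O i j) → R}

theorem isGNCHVModel_gluedWeight [DecidableEq ι] {S : ι → Λ → Type*} [∀ i l, Fintype (S i l)]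
    {w : ∀ i l, S i l → R} {r : (i : ι) → (l : Λ) → (j : M i) → S i l → O i j → R}
    (hT : ∀ C ∈ T, ∀ i, C i ∈ Ctx i) (hq : q ∈ stdSimplex R Λ)
    (hGLHV : ∀ C ∈ T, ∀ m : ∀ i, (j : C i) → O i j, p C m = ∑ l, q l * ∏ i, pb i (C i) l (m i))
    (hRef : ∀ i l, IsNCHVModel (Ctx i) (fun Ci ↦ pb i Ci l) (w i l) (r i l)) :
    IsGNCHVModel T p (gluedWeight q w) fun i j ξ ↦ r i ξ.1 j (ξ.2 i) where
  weight_mem := gluedWeight_mem_stdSimplex hq fun i l ↦ (hRef i l).weight_mem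
  response_mem i j ξ := (hRef i ξ.1).response_mem j (ξ.2 i)
  eq_sum C hC m := calc
    p C m = ∑ l, q l * ∏ i, pb i (C i) l (m i) := hGLHV C hC m
    _ = ∑ l, q l * ∏ i, ∑ σ, w i l σ * ∏ j : C i, r i l j σ (m i j) := by
      simp only [(hRef _ _).eq_sum _ (hT C hC _)]
    _ = ∑ ξ, gluedWeight q w ξ * ∏ i, ∏ j : C i, r i ξ.1 j (ξ.2 i) (m i j) :=
      (sum_gluedWeight_mul_prod q w fun i l σ ↦ ∏ j : C i, r i l j σ (m i j)).symm

theorem glhv_composition_to_gnchv_general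
    (hT : ∀ C ∈ T, ∀ i, C i ∈ Ctx i) (hq : q ∈ stdSimplex R Λ)
    (hGLHV : ∀ C ∈ T, ∀ m : ∀ i, (j : C i) → O i j, p C m = ∑ l, q l * ∏ i, pb i (C i) l (m i))
    (hRef : ∀ i l, ∃ (s : ℕ) (w : Fin s → R) (r : (j : M i) → Fin s → O i j → R),
      IsNCHVModel (Ctx i) (fun Ci ↦ pb i Ci l) w r) :
    ∃ (K : ℕ) (Q : Fin K → R) (r : (i : ι) → (j : M i) → Fin K → O i j → R),
      IsGNCHVModel T p Q r := by
  classical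
  choose s w r hr using hRef
  exact ⟨_, _, _, (isGNCHVModel_gluedWeight hT hq hGLHV hr).comp_equiv (Fintype.equivFin _).symm⟩

end Composition

/-- Classical composition lemma: a GLHV model on the tested family `T` of
multipartite contexts whose block responses all admit conditional
local-noncontextual refinements glues to a single global noncontextual
hidden-variable (GNCHV) model.  Finite hidden-variable types are represented
as `Fin k`. -/
theorem glhv_composition_to_gnchv
    (n : ℕ)
    (M : Fin n → Type) [∀ i, Fintype (M i)] [∀ i, DecidableEq (M i)]
    (O : (i : Fin n) → M i → Type) [∀ i j, Fintype (O i j)]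
    (Ctx : ∀ i, Finset (Finset (M i)))
    (T : Set (∀ i, Finset (M i)))
    (hT : ∀ C ∈ T, ∀ i, C i ∈ Ctx i)
    -- the empirical model: a probability distribution over joint outcome
    -- tuples for each tested multipartite context
    (p : (C : ∀ i, Finset (M i)) → (∀ i, (j : ↥(C i)) → O i j.1) → ℝ)
    (hp0 : ∀ C ∈ T, ∀ m, 0 ≤ p C m)
    (hp1 : ∀ C ∈ T, ∑ m : ∀ i, (j : ↥(C i)) → O i j.1, p C m = 1)
    -- (GLHV) one shared hidden variable with block responses per local context
    (Λ : Type) [Fintype Λ]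
    (q : Λ → ℝ) (hq0 : ∀ l, 0 ≤ q l) (hq1 : ∑ l, q l = 1)
    (pb : (i : Fin n) → (Ci : Finset (M i)) → Λ → ((j : ↥Ci) → O i j.1) → ℝ)
    (hpb0 : ∀ (i : Fin n) (Ci : Finset (M i)) (l : Λ) m, 0 ≤ pb i Ci l m)
    (hpb1 : ∀ (i : Fin n) (Ci : Finset (M i)) (l : Λ),
      ∑ m : (j : ↥Ci) → O i j.1, pb i Ci l m = 1)
    (hGLHV : ∀ C ∈ T, ∀ m : ∀ i, (j : ↥(C i)) → O i j.1,
      p C m = ∑ l, q l * ∏ i, pb i (C i) l (m i))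
    -- (conditional NCHV refinement) each block response factorizes through a
    -- further finite hidden variable with context-independent responses
    (hRef : ∀ (i : Fin n) (l : Λ),
      ∃ (s : ℕ) (qs : Fin s → ℝ),
        (∀ σ, 0 ≤ qs σ) ∧ (∑ σ, qs σ = 1) ∧
        ∃ r : (j : M i) → Fin s → O i j → ℝ,
          (∀ j σ m, 0 ≤ r j σ m) ∧ (∀ j σ, ∑ m, r j σ m = 1) ∧
          ∀ Ci ∈ Ctx i, ∀ m : (j : ↥Ci) → O i j.1,
            pb i Ci l m = ∑ σ, qs σ * ∏ j : ↥Ci, r j.1 σ (m j)) :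
    -- (GNCHV) conclusion: one hidden variable with context-independent
    -- per-measurement responses reproducing every tested context
    ∃ (K : ℕ) (Q : Fin K → ℝ),
      (∀ x, 0 ≤ Q x) ∧ (∑ x, Q x = 1) ∧
      ∃ R : (i : Fin n) → (j : M i) → Fin K → O i j → ℝ,
        (∀ i j x m, 0 ≤ R i j x m) ∧ (∀ i j x, ∑ m, R i j x m = 1) ∧
        ∀ C ∈ T, ∀ m : ∀ i, (j : ↥(C i)) → O i j.1,
          p C m = ∑ x, Q x * ∏ i, ∏ j : ↥(C i), R i j.1 x (m i j) := by
  obtain ⟨K, Q, R, h⟩ := glhv_composition_to_gnchv_general hT ⟨hq0, hq1⟩ hGLHV fun i l ↦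
    let ⟨s, w, hw0, hw1, r, hr0, hr1, hr⟩ := hRef i l
    ⟨s, w, r, ⟨hw0, hw1⟩, fun j σ ↦ ⟨hr0 j σ, hr1 j σ⟩, hr⟩
  exact ⟨K, Q, h.weight_mem.1, h.weight_mem.2, R, fun i j x ↦ (h.response_mem i j x).1,
    fun i j x ↦ (h.response_mem i j x).2, h.eq_sum⟩
end

section
/- Let n be a natural number and for each i ∈ Fin n let d_i be a positive dimension. Let ρ be a complex matrix indexed by (Π i, Fin (d_i)) × (Π i, Fin (d_i)) that is separable across the parties: there are a finite type I, weights r : I → ℝ with r μ ≥ 0 and Σ_μ r μ = 1, and for each μ and i a matrix ρ_i^μ on Fin (d_i), such that ρ(k, l) = Σ_μ r μ · Π_i ρ_i^μ(k i, l i) for all k, l. For each party i let M_i be a finite set of measurements, each j ∈ M_i having a finite outcome set O_j and matrices E_i(j, m) on Fin (d_i) (one per outcome m ∈ O_j), let 𝒞_i be a finite family of local contexts C_i ⊆ M_i whose members' matrices pairwise commute within each context, and for a context C_i and outcomes (m_j)_{j∈C_i} let E_i(C_i, (m_j)) = Π_{j∈C_i} E_i(j, m_j). Assume that for every μ and every i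 the local state ρ_i^μ admits an NCHV-local model: there are a finite type Λ, weights q : Λ → ℝ with q λ ≥ 0 and Σ_λ q λ = 1, and responses p_i^μ(m | j, λ) ≥ 0 with Σ_m p_i^μ(m | j, λ) = 1, such that Tr(ρ_i^μ · E_i(C_i, (m_j))) = Σ_λ q λ · Π_{j∈C_i} p_i^μ(m_j | j, λ) for every C_i ∈ 𝒞_i and all outcomes. Then the composite statistics admit a GNCHV model: there exist a finite type Ξ, weights Q : Ξ → ℝ with Q ξ ≥ 0 and Σ_ξ Q ξ = 1, and context-independent responses P(m | i, j, ξ), such that for every multipartite context C = (C_1,…,C_n) ∈ 𝒞_1 × ⋯ × 𝒞_n and all outcomes, Tr(ρ · E(C, (m_{ij}))) = Σ_ξ Q ξ · Π_i Π_{j∈C_i} P(m_{ij} | i, j, ξ), where E(C, (m_{ij})) is the matrix with entries E(C,(m_{ij}))(k,l) = Π_i E_i(C_i, (m_{ij})_{j∈C_i})(k i, l i) (the tensor product of the local context effects). -/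
/-- The joint effect of a compatible local context: the product
`Π_{j∈C_i} E_i(j, m_j)` of the (pairwise commuting) outcome effects of the
measurements in the context. -/
noncomputable def ctxEffect {d : ℕ} {Mi : Type} [DecidableEq Mi] {O : Mi → Type}
    (Eff : (j : Mi) → O j → Matrix (Fin d) (Fin d) ℂ)
    (Ci : Finset Mi) (m : (j : ↥Ci) → O j.1)
    (hcomm : ∀ j ∈ Ci, ∀ j' ∈ Ci, ∀ a b, Commute (Eff j a) (Eff j' b)) :
    Matrix (Fin d) (Fin d) ℂ :=
  Ci.attach.noncommProd (fun j => Eff j.1 (m j))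
    (fun a _ b _ _ => hcomm a.1 a.2 b.1 b.2 _ _)

/-!
On a product effect the statistics of `ρ` are `∑ μ, r μ * ∏ i, Tr(ρ_i^μ E_i)`: a convex mixture of
products of local statistics. Noncontextual statistics are closed under both operations: independent
local hidden variables `λ_i` explain a product of statistics, and adjoining the mixture index `μ`
to the hidden variable explains a mixture.
-/

section PiKronecker

variable {ι R : Type*} [Fintype ι] [CommSemiring R] {κ κ₁ κ₂ : ι → Type*}

/-- The tensor product of a finite family of matrices, indexed by the products of their index
types. -/
def piKronecker (A : ∀ i, Matrix (κ i) (κ₁ i) R) : Matrix (∀ i, κ i) (∀ i, κ₁ i) R :=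
  Matrix.of fun k l => ∏ i, A i (k i) (l i)

variable [DecidableEq ι]

theorem piKronecker_mul [∀ i, Fintype (κ₁ i)] (A : ∀ i, Matrix (κ i) (κ₁ i) R)
    (B : ∀ i, Matrix (κ₁ i) (κ₂ i) R) :
    piKronecker A * piKronecker B = piKronecker fun i => A i * B i := by
  ext k l
  simp only [piKronecker, Matrix.mul_apply, Matrix.of_apply, Fintype.prod_sum,
    Finset.prod_mul_distrib]

variable [∀ i, Fintype (κ i)]

theorem trace_piKronecker (A : ∀ i, Matrix (κ i) (κ i) R) :
    (piKronecker A).trace = ∏ i, (A i).trace := by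
  simp only [piKronecker, Matrix.trace, Matrix.diag_apply, Matrix.of_apply, Fintype.prod_sum]

theorem trace_sum_smul_piKronecker_mul {I : Type*} [Fintype I] (r : I → R)
    (A : I → ∀ i, Matrix (κ i) (κ i) R) (B : ∀ i, Matrix (κ i) (κ i) R) :
    ((∑ μ, r μ • piKronecker (A μ)) * piKronecker B).trace
      = ∑ μ, r μ * ∏ i, (A μ i * B i).trace := by
  simp only [Finset.sum_mul, Matrix.trace_sum, Matrix.smul_mul, Matrix.trace_smul,
    piKronecker_mul, trace_piKronecker, smul_eq_mul]

end PiKronecker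

/-- The statistics `p` of a single party on the contexts in `Ctx` admit an NCHV model: one
distribution `q` of a finite hidden variable and responses `P j` depending on the measurement `j`
but not on its context. The statistics are complex-valued because they arise as traces. -/
def IsNCHV {M : Type*} {O : M → Type*} [∀ j, Fintype (O j)] (Ctx : Set (Finset M))
    (p : (C : Finset M) → C ∈ Ctx → ((j : C) → O j) → ℂ) : Prop :=
  ∃ (L : ℕ) (q : Fin L → ℝ), (∀ l, 0 ≤ q l) ∧ ∑ l, q l = 1 ∧
    ∃ P : (j : M) → Fin L → O j → ℝ, (∀ j l m, 0 ≤ P j l m) ∧ (∀ j l, ∑ m, P j l m = 1) ∧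
      ∀ C hC m, p C hC m = ((∑ l, q l * ∏ j : C, P j l (m j) : ℝ) : ℂ)

section GNCHV

variable {ι : Type*} [Fintype ι] {M : ι → Type*} {O : ∀ i, M i → Type*} [∀ i j, Fintype (O i j)]
  {Ctx : ∀ i, Set (Finset (M i))}

/-- The statistics `p` of several parties admit a GNCHV model: a single finite hidden variable
shared by all parties, given which all responses are independent and noncontextual. A multipartite
context is a choice of one local context per party. -/
def IsGNCHV (Ctx : ∀ i, Set (Finset (M i)))
    (p : (C : ∀ i, Finset (M i)) → (∀ i, C i ∈ Ctx i) → (∀ i, (j : C i) → O i j) → ℂ) : Prop :=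
  ∃ (K : ℕ) (Q : Fin K → ℝ), (∀ x, 0 ≤ Q x) ∧ ∑ x, Q x = 1 ∧
    ∃ P : ∀ i, (j : M i) → Fin K → O i j → ℝ,
      (∀ i j x m, 0 ≤ P i j x m) ∧ (∀ i j x, ∑ m, P i j x m = 1) ∧
      ∀ C hC m, p C hC m = ((∑ x, Q x * ∏ i, ∏ j : C i, P i j x (m i j) : ℝ) : ℂ)

theorem IsGNCHV.of_fintype {Ξ : Type*} [Fintype Ξ]
    {p : (C : ∀ i, Finset (M i)) → (∀ i, C i ∈ Ctx i) → (∀ i, (j : C i) → O i j) → ℂ}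
    (Q : Ξ → ℝ) (hQ0 : ∀ ξ, 0 ≤ Q ξ) (hQ1 : ∑ ξ, Q ξ = 1)
    (P : ∀ i, (j : M i) → Ξ → O i j → ℝ)
    (hP0 : ∀ i j ξ m, 0 ≤ P i j ξ m) (hP1 : ∀ i j ξ, ∑ m, P i j ξ m = 1)
    (hp : ∀ C hC m, p C hC m = ((∑ ξ, Q ξ * ∏ i, ∏ j : C i, P i j ξ (m i j) : ℝ) : ℂ)) :
    IsGNCHV Ctx p := by
  let e := (Fintype.equivFin Ξ).symm
  exact ⟨_, Q ∘ e, fun x => hQ0 (e x), (e.sum_comp Q).trans hQ1, fun i j x => P i j (e x),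
    fun i j x => hP0 i j (e x), fun i j x => hP1 i j (e x), fun C hC m => by
      simp only [hp, ← e.sum_comp, Function.comp_apply]⟩

theorem IsGNCHV.prod {p : ∀ i, (C : Finset (M i)) → C ∈ Ctx i → ((j : C) → O i j) → ℂ}
    (h : ∀ i, IsNCHV (Ctx i) (p i)) :
    IsGNCHV Ctx fun C hC m => ∏ i, p i (C i) (hC i) (m i) := by
  classical
  choose L q hq0 hq1 P hP0 hP1 hp using h
  refine .of_fintype (fun ξ : ∀ i, Fin (L i) => ∏ i, q i (ξ i))
    (fun ξ => Finset.prod_nonneg fun i _ => hq0 i (ξ i)) ?_ (fun i j ξ => P i j (ξ i))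
    (fun i j ξ => hP0 i j (ξ i)) (fun i j ξ => hP1 i j (ξ i)) fun C hC m => ?_
  · simp only [← Fintype.prod_sum, hq1, Finset.prod_const_one]
  · simp only [hp, ← Complex.ofReal_prod, Fintype.prod_sum, Finset.prod_mul_distrib]

theorem IsGNCHV.mixture {I : Type*} [Fintype I] {r : I → ℝ} (hr0 : ∀ μ, 0 ≤ r μ)
    (hr1 : ∑ μ, r μ = 1)
    {p : I → (C : ∀ i, Finset (M i)) → (∀ i, C i ∈ Ctx i) → (∀ i, (j : C i) → O i j) → ℂ}
    (h : ∀ μ, IsGNCHV Ctx (p μ)) :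
    IsGNCHV Ctx fun C hC m => ∑ μ, (r μ : ℂ) * p μ C hC m := by
  choose K Q hQ0 hQ1 P hP0 hP1 hp using h
  refine .of_fintype (fun ξ : Σ μ, Fin (K μ) => r ξ.1 * Q ξ.1 ξ.2)
    (fun ξ => mul_nonneg (hr0 ξ.1) (hQ0 ξ.1 ξ.2)) ?_ (fun i j ξ => P ξ.1 i j ξ.2)
    (fun i j ξ => hP0 ξ.1 i j ξ.2) (fun i j ξ => hP1 ξ.1 i j ξ.2) fun C hC m => ?_
  · simp only [Fintype.sum_sigma, ← Finset.mul_sum, hQ1, mul_one, hr1]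
  · simp only [hp, Fintype.sum_sigma, mul_assoc, ← Finset.mul_sum, Complex.ofReal_sum,
      Complex.ofReal_mul]

theorem separable_reduction_general [DecidableEq ι] {κ : ι → Type*} [∀ i, Fintype (κ i)]
    {ρ : Matrix (∀ i, κ i) (∀ i, κ i) ℂ} {I : Type*} [Fintype I]
    {r : I → ℝ} (hr0 : ∀ μ, 0 ≤ r μ) (hr1 : ∑ μ, r μ = 1)
    {ρloc : I → ∀ i, Matrix (κ i) (κ i) ℂ}
    (hsep : ρ = ∑ μ, (r μ : ℂ) • piKronecker (ρloc μ))
    (E : ∀ i, (C : Finset (M i)) → C ∈ Ctx i → ((j : C) → O i j) → Matrix (κ i) (κ i) ℂ)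
    (hNCHV : ∀ μ i, IsNCHV (Ctx i) fun C hC m => (ρloc μ i * E i C hC m).trace) :
    IsGNCHV Ctx fun C hC m =>
      (ρ * piKronecker fun i => E i (C i) (hC i) (m i)).trace := by
  simp only [hsep, trace_sum_smul_piKronecker_mul]
  exact .mixture hr0 hr1 fun μ => .prod (hNCHV μ)

end GNCHV

/-- Separable reduction: if the multipartite state is separable across the
parties, `ρ = Σ_μ r_μ ρ_1^μ ⊗ ⋯ ⊗ ρ_n^μ` (tensor products encoded entrywise),
and every local component `ρ_i^μ` admits an NCHV-local model for party `i`'s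
measurement scenario, then the composite statistics on all multipartite
contexts admit a global noncontextual hidden-variable (GNCHV) model. -/
theorem separable_reduction
    (n : ℕ) (d : Fin n → ℕ) (hd : ∀ i, 0 < d i)
    (ρ : Matrix (∀ i, Fin (d i)) (∀ i, Fin (d i)) ℂ)
    (I : Type) [Fintype I]
    (r : I → ℝ) (hr0 : ∀ μ, 0 ≤ r μ) (hr1 : ∑ μ, r μ = 1)
    (ρloc : I → (i : Fin n) → Matrix (Fin (d i)) (Fin (d i)) ℂ)
    (hsep : ∀ k l, ρ k l = ∑ μ, (r μ : ℂ) * ∏ i, ρloc μ i (k i) (l i))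
    (M : Fin n → Type) [∀ i, Fintype (M i)] [∀ i, DecidableEq (M i)]
    (O : (i : Fin n) → M i → Type) [∀ i j, Fintype (O i j)]
    (Eff : (i : Fin n) → (j : M i) → O i j → Matrix (Fin (d i)) (Fin (d i)) ℂ)
    (Ctx : ∀ i, Finset (Finset (M i)))
    -- measurements within each local context pairwise commute
    (hcomm : ∀ (i : Fin n), ∀ Ci ∈ Ctx i, ∀ j ∈ Ci, ∀ j' ∈ Ci, ∀ a b,
      Commute (Eff i j a) (Eff i j' b))
    -- every local component state admits an NCHV-local model
    (hNCHV : ∀ (μ : I) (i : Fin n),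
      ∃ (L : ℕ) (q : Fin L → ℝ),
        (∀ l, 0 ≤ q l) ∧ (∑ l, q l = 1) ∧
        ∃ pr : (j : M i) → Fin L → O i j → ℝ,
          (∀ j l m, 0 ≤ pr j l m) ∧ (∀ j l, ∑ m, pr j l m = 1) ∧
          ∀ (Ci : Finset (M i)) (hCi : Ci ∈ Ctx i), ∀ m : (j : ↥Ci) → O i j.1,
            Matrix.trace (ρloc μ i * ctxEffect (Eff i) Ci m (hcomm i Ci hCi))
              = ((∑ l, q l * ∏ j : ↥Ci, pr j.1 l (m j) : ℝ) : ℂ)) :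
    -- GNCHV conclusion for the composite statistics
    ∃ (K : ℕ) (Q : Fin K → ℝ),
      (∀ x, 0 ≤ Q x) ∧ (∑ x, Q x = 1) ∧
      ∃ P : (i : Fin n) → (j : M i) → Fin K → O i j → ℝ,
        (∀ i j x m, 0 ≤ P i j x m) ∧ (∀ i j x, ∑ m, P i j x m = 1) ∧
        ∀ (C : ∀ i, Finset (M i)) (hC : ∀ i, C i ∈ Ctx i),
          ∀ m : ∀ i, (j : ↥(C i)) → O i j.1,
            Matrix.trace (ρ * Matrix.of (fun k l =>
                ∏ i, ctxEffect (Eff i) (C i) (m i) (hcomm i (C i) (hC i)) (k i) (l i)))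
              = ((∑ x, Q x * ∏ i, ∏ j : ↥(C i), P i j.1 x (m i j) : ℝ) : ℂ) :=
  separable_reduction_general hr0 hr1
    (Matrix.ext fun k l => by simp [hsep, piKronecker, Matrix.sum_apply])
    (fun i C hC m => ctxEffect (Eff i) C m (hcomm i C hC)) hNCHV
end
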